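/- The map ν ↦ F_ν is injective: if ν₁ and ν₂ are probability measures on [0,∞] such that F_{ν₁}(x,y) = F_{ν₂}(x,y) for all x, y ∈ ℝ, then ν₁ = ν₂. -/

import Mathlib

open MeasureTheory Filter Topology
open scoped ENNReal

/-- Standard normal density. -/
noncomputable def stdPdf (t : ℝ) : ℝ := (Real.sqrt (2 * Real.pi))⁻¹ * Real.exp (-(t ^ 2) / 2)

/-- Standard normal CDF. -/
noncomputable def stdCdf (x : ℝ) : ℝ := ∫ t in Set.Iic x, stdPdf t

/-- The integrand `Φ(λ + (y−x)/(2λ)) e^{−x} + Φ(λ + (x−y)/(2λ)) e^{−y}` extended continuously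
to `λ = 0` and `λ = ∞` (we identify `[0,∞]` with `ℝ≥0∞`). -/
noncomputable def nuKer (x y : ℝ) (l : ℝ≥0∞) : ℝ :=
  if l = 0 then Real.exp (-min x y)
  else if l = ⊤ then Real.exp (-x) + Real.exp (-y)
  else
    stdCdf (l.toReal + (y - x) / (2 * l.toReal)) * Real.exp (-x)
      + stdCdf (l.toReal + (x - y) / (2 * l.toReal)) * Real.exp (-y)

/-- The mixed bivariate Hüsler–Reiss distribution function `F_ν` associated with a (probability)
measure `ν` on `[0,∞]`. -/
noncomputable def Fnu (ν : Measure ℝ≥0∞) (x y : ℝ) : ℝ :=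
  Real.exp (-∫ l, nuKer x y l ∂ν)

/-- Weak convergence of measures: convergence of integrals of bounded continuous functions. -/
def WeakTendsto {α : Type*} [TopologicalSpace α] [MeasurableSpace α]
    (μ : ℕ → Measure α) (ν : Measure α) : Prop :=
  ∀ f : BoundedContinuousFunction α ℝ,
    Tendsto (fun n => ∫ a, f a ∂(μ n)) atTop (𝓝 (∫ a, f a ∂ν))
open ProbabilityTheory Set

lemma stdPdf_eq (t : ℝ) : stdPdf t = gaussianPDFReal 0 1 t := by
  simp [stdPdf, gaussianPDFReal]

lemma integrable_stdPdf : Integrable stdPdf := by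
  have : stdPdf = gaussianPDFReal 0 1 := funext stdPdf_eq
  rw [this]; exact integrable_gaussianPDFReal 0 1

lemma integral_stdPdf : ∫ t, stdPdf t = 1 := by
  simp_rw [stdPdf_eq]
  exact integral_gaussianPDFReal_eq_one 0 one_ne_zero

lemma stdPdf_nonneg (t : ℝ) : 0 ≤ stdPdf t := by
  unfold stdPdf; positivity

lemma stdCdf_mono : Monotone stdCdf := by
  intro a b hab
  unfold stdCdf
  exact setIntegral_mono_set integrable_stdPdf.integrableOn
    (ae_of_all _ fun t => stdPdf_nonneg t) (Iic_subset_Iic.2 hab).eventuallyLE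

lemma integral_Ioi_stdPdf (c : ℝ) : ∫ t in Ioi c, stdPdf t = 1 - stdCdf c := by
  have := intervalIntegral.integral_Iic_add_Ioi (b := c) (f := stdPdf) (μ := volume)
    integrable_stdPdf.integrableOn integrable_stdPdf.integrableOn
  rw [integral_stdPdf] at this
  unfold stdCdf
  linarith

lemma stdCdf_neg (c : ℝ) : stdCdf (-c) = 1 - stdCdf c := by
  rw [← integral_Ioi_stdPdf, stdCdf, ← integral_comp_neg_Ioi]
  simp [stdPdf]

lemma integral_Iic_stdPdf_shift (c s : ℝ) : ∫ t in Iic c, stdPdf (t - s) = stdCdf (c - s) := by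
  unfold stdCdf
  rw [← integral_indicator measurableSet_Iic, ← integral_indicator measurableSet_Iic,
    ← integral_sub_right_eq_self ((Iic (c - s)).indicator fun t => stdPdf t) s]
  congr 1; ext t
  simp [indicator]

lemma shift_pdf (L t z : ℝ) : Real.exp (2*L*t - 2*L^2 - z) * stdPdf t
    = Real.exp (-z) * stdPdf (t - 2 * L) := by
  unfold stdPdf
  rw [mul_left_comm, mul_left_comm (Real.exp (-z)), ← Real.exp_add, ← Real.exp_add]
  ring_nf

lemma kerInt (z : ℝ) (L : ℝ) (hL : 0 < L) :
    ∫ t, min 1 (Real.exp (2*L*t - 2*L^2 - z)) ∂(gaussianReal 0 1) =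
      (1 - stdCdf (L + z / (2 * L))) + Real.exp (-z) * (1 - stdCdf (L - z / (2*L))) := by
  rw [integral_gaussianReal_eq_integral_smul one_ne_zero]
  simp_rw [← stdPdf_eq, smul_eq_mul]
  set c := L + z / (2 * L) with hc
  have hcz : z = 2 * L * c - 2 * L^2 := by rw [hc]; field_simp; ring
  have hint : Integrable (fun t => stdPdf t * min 1 (Real.exp (2*L*t - 2*L^2 - z))) := by
    refine integrable_stdPdf.mono' ?_ ?_
    · apply Measurable.aestronglyMeasurable
      unfold stdPdf; fun_prop
    · refine ae_of_all _ fun t => ?_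
      rw [Real.norm_of_nonneg (mul_nonneg (stdPdf_nonneg t) (by positivity))]
      exact mul_le_of_le_one_right (stdPdf_nonneg t) (min_le_left _ _)
  rw [← intervalIntegral.integral_Iic_add_Ioi (b := c) hint.integrableOn hint.integrableOn]
  have h1 : ∫ t in Iic c, stdPdf t * min 1 (Real.exp (2*L*t - 2*L^2 - z))
      = ∫ t in Iic c, Real.exp (-z) * stdPdf (t - 2 * L) := by
    refine setIntegral_congr_fun measurableSet_Iic fun t ht => ?_
    have ht' : t ≤ c := ht
    rw [min_eq_right, mul_comm, shift_pdf]
    rw [← Real.exp_zero, Real.exp_le_exp]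
    nlinarith
  have h2 : ∫ t in Ioi c, stdPdf t * min 1 (Real.exp (2*L*t - 2*L^2 - z))
      = ∫ t in Ioi c, stdPdf t := by
    refine setIntegral_congr_fun measurableSet_Ioi fun t ht => ?_
    have ht' : c < t := ht
    rw [min_eq_left, mul_one]
    rw [← Real.exp_zero, Real.exp_le_exp]
    nlinarith
  rw [h1, h2, integral_const_mul, integral_Iic_stdPdf_shift, integral_Ioi_stdPdf,
    ← stdCdf_neg (L - z / (2*L)), add_comm]
  congr 4
  rw [hc]; ring

noncomputable def Mk (z : ℝ) (l : ℝ≥0∞) : ℝ := 1 + Real.exp (-z) - nuKer 0 z l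

lemma Mk_top (z : ℝ) : Mk z ⊤ = 0 := by simp [Mk, nuKer]

lemma Mk_fin (z : ℝ) (l : ℝ≥0∞) (hl : l ≠ ⊤) :
    Mk z l = ∫ t, min 1 (Real.exp (2*l.toReal*t - 2*l.toReal^2 - z)) ∂(gaussianReal 0 1) := by
  by_cases h0 : l = 0
  · subst h0
    simp only [Mk, nuKer, ENNReal.toReal_zero]
    simp
    rcases le_total 0 z with h | h
    · rw [min_eq_left h, min_eq_right (by simpa using h)]; simp
    · rw [min_eq_right h, min_eq_left (by simpa using h)]; ring
  · rw [kerInt z _ (ENNReal.toReal_pos h0 hl)]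
    simp [Mk, nuKer, h0, hl, sub_eq_add_neg, neg_div]
    ring

lemma Mk_meas : Measurable (fun p : ℝ≥0∞ × ℝ => Mk p.2 p.1) := by
  unfold Mk nuKer
  have := stdCdf_mono.measurable
  refine Measurable.sub (by fun_prop) ?_
  refine Measurable.ite (measurable_fst (measurableSet_singleton 0)) (by fun_prop) ?_
  refine Measurable.ite (measurable_fst (measurableSet_singleton ⊤)) (by fun_prop) ?_
  fun_prop

lemma min_exp (w z : ℝ) : Real.exp (z/2) * min 1 (Real.exp (w - z))
    = Real.exp (w/2) * Real.exp (-|z - w|/2) := by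
  rcases le_total z w with h | h
  · rw [min_eq_left (by simpa using h), abs_of_nonpos (by linarith), ← Real.exp_add, mul_one]
    ring_nf
  · rw [min_eq_right (by simpa using h), abs_of_nonneg (by linarith), ← Real.exp_add,
      ← Real.exp_add]
    ring_nf

noncomputable def Cc (ξ : ℝ) : ℂ := ((1/4 + ξ^2 : ℝ) : ℂ)⁻¹

lemma fourier_abs (ξ : ℝ) :
    Integrable (fun z : ℝ => Complex.exp (Complex.I * ξ * z) * (Real.exp (-|z|/2) : ℝ)) ∧
    ∫ z : ℝ, Complex.exp (Complex.I * ξ * z) * (Real.exp (-|z|/2) : ℝ) = Cc ξ := by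
  have e1 : ∀ z ∈ Iic (0:ℝ), Complex.exp (Complex.I * ξ * z) * (Real.exp (-|z|/2) : ℝ)
      = Complex.exp ((1/2 + Complex.I * ξ) * z) := by
    intro z hz
    rw [abs_of_nonpos hz]
    push_cast
    rw [← Complex.exp_add]; ring_nf
  have e2 : ∀ z ∈ Ioi (0:ℝ), Complex.exp (Complex.I * ξ * z) * (Real.exp (-|z|/2) : ℝ)
      = Complex.exp ((-(1/2) + Complex.I * ξ) * z) := by
    intro z hz
    rw [abs_of_pos hz]
    push_cast
    rw [← Complex.exp_add]; ring_nf
  have r1 : 0 < (1/2 + Complex.I * ξ : ℂ).re := by simp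
  have r2 : (-(1/2) + Complex.I * ξ : ℂ).re < 0 := by simp
  have i1 := (integrableOn_congr_fun e1 measurableSet_Iic).2
    (integrableOn_exp_mul_complex_Iic r1 0)
  have i2 := (integrableOn_congr_fun e2 measurableSet_Ioi).2
    (integrableOn_exp_mul_complex_Ioi r2 0)
  constructor
  · rw [← integrableOn_univ, ← Iic_union_Ioi (a := (0:ℝ))]
    exact i1.union i2
  · rw [← intervalIntegral.integral_Iic_add_Ioi i1 i2, setIntegral_congr_fun measurableSet_Iic e1,
      setIntegral_congr_fun measurableSet_Ioi e2, integral_exp_mul_complex_Iic r1,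
      integral_exp_mul_complex_Ioi r2]
    have n1 : (1/2 + Complex.I * ξ : ℂ) ≠ 0 := fun h => by rw [h] at r1; simp at r1
    have n2 : (-(1/2) + Complex.I * ξ : ℂ) ≠ 0 := fun h => by rw [h] at r2; simp at r2
    have n3 : ((1/4 + ξ^2 : ℝ) : ℂ) = (1/2 + Complex.I * ξ) * -(-(1/2) + Complex.I * ξ) := by
      push_cast; ring_nf; simp
    rw [Cc, n3]
    simp only [Complex.ofReal_zero, mul_zero, Complex.exp_zero]
    have n4 : (1/2 + Complex.I * ξ : ℂ) - (-(1/2) + Complex.I * ξ) = 1 := by ring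
    generalize (1/2 + Complex.I * ξ : ℂ) = p at *
    generalize (-(1/2) + Complex.I * ξ : ℂ) = q at *
    field_simp
    linear_combination -n4

lemma fourier_abs_shift (ξ w : ℝ) :
    Integrable (fun z : ℝ => Complex.exp (Complex.I * ξ * z) * (Real.exp (-|z - w|/2) : ℝ)) ∧
    ∫ z : ℝ, Complex.exp (Complex.I * ξ * z) * (Real.exp (-|z - w|/2) : ℝ)
      = Complex.exp (Complex.I * ξ * w) * Cc ξ := by
  have key : (fun z : ℝ => Complex.exp (Complex.I * ξ * z) * (Real.exp (-|z - w|/2) : ℝ))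
    = fun z : ℝ => Complex.exp (Complex.I * ξ * w) *
      (fun z : ℝ => Complex.exp (Complex.I * ξ * z) * (Real.exp (-|z|/2) : ℝ)) (z - w) := by
    ext z
    simp only
    rw [← mul_assoc, ← Complex.exp_add]
    push_cast; ring_nf
  rw [key]
  refine ⟨((fourier_abs ξ).1.comp_sub_right w).const_mul _, ?_⟩
  rw [integral_const_mul, integral_sub_right_eq_self
    (fun z : ℝ => Complex.exp (Complex.I * ξ * z) * (Real.exp (-|z|/2) : ℝ)), (fourier_abs ξ).2]

lemma gauss_mgf (ξ L : ℝ) :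
    ∫ t, Complex.exp ((1/2 + Complex.I * ξ) * ((2*L*t - 2*L^2 : ℝ) : ℂ)) ∂(gaussianReal 0 1)
      = (Real.exp (-(L^2 * (1/2 + 2*ξ^2))) : ℝ) := by
  have := complexMGF_id_gaussianReal (μ := 0) (v := 1) ((1/2 + Complex.I * ξ) * (2 * L))
  rw [complexMGF] at this
  have e : ∀ t : ℝ, Complex.exp ((1/2 + Complex.I * ξ) * ((2*L*t - 2*L^2 : ℝ) : ℂ))
      = Complex.exp (-(1/2 + Complex.I * ξ) * (2*L^2)) *
        Complex.exp ((1/2 + Complex.I * ξ) * (2 * L) * ((id t : ℝ) : ℂ)) := by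
    intro t
    rw [← Complex.exp_add]
    push_cast; simp only [id]; ring_nf
  simp_rw [e]
  rw [integral_const_mul, this, ← Complex.exp_add, Complex.ofReal_exp]
  congr 1
  push_cast
  linear_combination 2 * L^2 * ξ^2 * Complex.I_sq

/-- The function `z ↦ e^{iξz} e^{z/2} M(z,λ)`. -/
noncomputable def Sk (ξ : ℝ) (l : ℝ≥0∞) (z : ℝ) : ℂ :=
  Complex.exp (Complex.I * ξ * z) * ((Real.exp (z/2) * Mk z l : ℝ) : ℂ)

lemma Sk_fin (ξ : ℝ) (l : ℝ≥0∞) (hl : l ≠ ⊤) (z : ℝ) :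
    Sk ξ l z = ∫ t, Complex.exp (Complex.I * ξ * z) *
      ((Real.exp ((2*l.toReal*t - 2*l.toReal^2)/2) *
        Real.exp (-|z - (2*l.toReal*t - 2*l.toReal^2)|/2) : ℝ) : ℂ) ∂(gaussianReal 0 1) := by
  rw [integral_const_mul, integral_complex_ofReal, Sk, Mk_fin z l hl, ← integral_const_mul]
  congr 2
  refine integral_congr_ae (ae_of_all _ fun t => ?_)
  exact min_exp _ _

/-- The value of the transform. -/
noncomputable def Tk (l : ℝ≥0∞) : ℝ := if l = ⊤ then 0 else Real.exp (-(l.toReal^2))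

lemma cross_integrable (ξ L : ℝ) : Integrable (Function.uncurry fun (t z : ℝ) =>
    Complex.exp (Complex.I * ξ * z) * ((Real.exp ((2*L*t - 2*L^2)/2) *
        Real.exp (-|z - (2*L*t - 2*L^2)|/2) : ℝ) : ℂ)) ((gaussianReal 0 1).prod volume) := by
  have hn : ∀ t z : ℝ, Complex.exp (Complex.I * ξ * z) * ((Real.exp ((2*L*t - 2*L^2)/2) *
        Real.exp (-|z - (2*L*t - 2*L^2)|/2) : ℝ) : ℂ) = (Real.exp ((2*L*t - 2*L^2)/2) : ℂ) *
        (Complex.exp (Complex.I * ξ * z) * (Real.exp (-|z - (2*L*t - 2*L^2)|/2) : ℝ)) := by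
    intro t z; push_cast; ring
  rw [integrable_prod_iff]
  · constructor
    · refine ae_of_all _ fun t => ?_
      simp only [Function.uncurry, hn]
      exact (fourier_abs_shift ξ _).1.const_mul _
    · have h0 : ∀ t : ℝ, ∫ z : ℝ, ‖Complex.exp (Complex.I * ξ * z) *
          ((Real.exp ((2*L*t - 2*L^2)/2) *
          Real.exp (-|z - (2*L*t - 2*L^2)|/2) : ℝ) : ℂ)‖ =
          Real.exp (-L^2) * Real.exp (L*t) * ∫ z : ℝ, Real.exp (-|z|/2) := by
        intro t
        rw [← integral_sub_right_eq_self (fun z => Real.exp (-|z|/2)) (2*L*t - 2*L^2),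
          ← integral_const_mul]
        congr 1; ext z
        rw [norm_mul, Complex.norm_exp, Complex.norm_real,
          Real.norm_of_nonneg (by positivity), ← Real.exp_add (-L^2)]
        simp
        ring_nf
      simp only [Function.uncurry, h0]
      exact ((integrable_exp_mul_gaussianReal L).const_mul _).mul_const _
  · apply Continuous.aestronglyMeasurable
    simp only [Function.uncurry_def]
    fun_prop

lemma Sk_props (ξ : ℝ) (l : ℝ≥0∞) : Integrable (Sk ξ l) ∧
    ∫ z, Sk ξ l z = Cc ξ * (if l = ⊤ then 0 else
      Real.exp (-(l.toReal^2 * (1/2 + 2*ξ^2))) : ℝ) := by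
  by_cases hl : l = ⊤
  · subst hl
    have : Sk ξ ⊤ = fun _ => 0 := by ext z; simp [Sk, Mk_top]
    simp [this]
  · have hS : Sk ξ l = _ := funext fun z => Sk_fin ξ l hl z
    have hI := cross_integrable ξ l.toReal
    rw [if_neg hl, hS]
    refine ⟨hI.integral_prod_right, ?_⟩
    rw [← integral_integral_swap hI, ← gauss_mgf, ← integral_const_mul]
    congr 1; ext t
    have := (fourier_abs_shift ξ (2*l.toReal*t - 2*l.toReal^2)).2
    simp_rw [Complex.ofReal_mul, mul_left_comm (Complex.exp _)]
    rw [integral_const_mul]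
    simp_rw [Complex.ofReal_exp] at this ⊢
    rw [this, ← mul_assoc, ← Complex.exp_add, mul_comm]
    congr 2
    push_cast; ring

lemma Mk_nonneg (z : ℝ) (l : ℝ≥0∞) : 0 ≤ Mk z l := by
  by_cases hl : l = ⊤
  · subst hl; rw [Mk_top]
  · rw [Mk_fin z l hl]; exact integral_nonneg fun t => by positivity

lemma Mk_le (z : ℝ) (l : ℝ≥0∞) : Mk z l ≤ 1 := by
  by_cases hl : l = ⊤
  · subst hl; rw [Mk_top]; exact zero_le_one
  · rw [Mk_fin z l hl]
    have := norm_integral_le_of_norm_le_const (μ := gaussianReal 0 1) (C := 1)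
      (f := fun t => min 1 (Real.exp (2*l.toReal*t - 2*l.toReal^2 - z)))
      (ae_of_all _ fun t => by
        rw [Real.norm_of_nonneg (by positivity)]; exact min_le_left _ _)
    simp at this
    exact (le_abs_self _).trans this

lemma Sk_meas (ξ : ℝ) : Measurable (Function.uncurry (Sk ξ)) := by
  unfold Sk
  have := Mk_meas
  simp only [Function.uncurry_def]
  fun_prop

lemma Sk_norm (ξ : ℝ) (l : ℝ≥0∞) (z : ℝ) : ‖Sk ξ l z‖ = (Sk 0 l z).re := by
  have := Mk_nonneg z l
  rw [Sk, norm_mul, Complex.norm_exp, Complex.norm_real, Real.norm_of_nonneg (by positivity)]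
  simp [Sk, -Complex.ofReal_mul, -Complex.ofReal_exp]

lemma Sk_int (ξ : ℝ) (ν : Measure ℝ≥0∞) [IsProbabilityMeasure ν] :
    Integrable (Function.uncurry (Sk ξ)) (ν.prod volume) := by
  rw [integrable_prod_iff (Sk_meas ξ).aestronglyMeasurable]
  refine ⟨ae_of_all _ fun l => (Sk_props ξ l).1, ?_⟩
  have h0 : ∀ l, ∫ z, ‖Sk ξ l z‖ = (Cc 0).re * (if l = ⊤ then 0 else
      Real.exp (-(l.toReal^2 * (1/2 + 2*0^2)))) := by
    intro l
    simp_rw [Sk_norm]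
    have := integral_re (Sk_props 0 l).1
    simp only [RCLike.re_to_complex] at this
    rw [this, (Sk_props 0 l).2, Complex.re_mul_ofReal]
  simp only [Function.uncurry, h0]
  refine Integrable.const_mul ?_ _
  refine Integrable.of_bound (C := 1) ?_ (ae_of_all _ fun l => ?_)
  · apply Measurable.aestronglyMeasurable
    exact Measurable.ite (measurableSet_singleton ⊤) (by fun_prop) (by fun_prop)
  · split_ifs
    · simp
    · rw [Real.norm_of_nonneg (by positivity), Real.exp_le_one_iff]
      have : 0 ≤ l.toReal^2 := by positivity
      nlinarith

lemma transform (ξ : ℝ) (ν : Measure ℝ≥0∞) [IsProbabilityMeasure ν] :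
    Cc ξ * ((∫ l, (if l = ⊤ then 0 else Real.exp (-(l.toReal^2 * (1/2 + 2*ξ^2)))) ∂ν : ℝ) : ℂ)
      = ∫ z : ℝ, Complex.exp (Complex.I * ξ * z) *
        ((Real.exp (z/2) * ∫ l, Mk z l ∂ν : ℝ) : ℂ) := by
  rw [← integral_complex_ofReal, ← integral_const_mul]
  simp_rw [← (Sk_props ξ _).2]
  rw [integral_integral_swap (Sk_int ξ ν)]
  congr 1; ext z
  simp_rw [Sk]
  rw [integral_const_mul, integral_complex_ofReal, integral_const_mul]

lemma Mk_integrable (ν : Measure ℝ≥0∞) [IsProbabilityMeasure ν] (z : ℝ) :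
    Integrable (fun l => Mk z l) ν := by
  refine Integrable.of_bound (C := 1) ?_ (ae_of_all _ fun l => ?_)
  · exact (Mk_meas.comp (measurable_id.prodMk measurable_const)).aestronglyMeasurable
  · rw [Real.norm_of_nonneg (Mk_nonneg z l)]; exact Mk_le z l

lemma int_Mk (ν : Measure ℝ≥0∞) [IsProbabilityMeasure ν] (z : ℝ) :
    ∫ l, Mk z l ∂ν = 1 + Real.exp (-z) - ∫ l, nuKer 0 z l ∂ν := by
  have h : ∀ l, nuKer 0 z l = 1 + Real.exp (-z) - Mk z l := fun l => by simp [Mk]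
  simp_rw [h]
  rw [integral_sub (integrable_const _) (Mk_integrable ν z)]
  simp

lemma Tk_mem (l : ℝ≥0∞) : Tk l ∈ Icc (0:ℝ) 1 := by
  unfold Tk
  split_ifs
  · simp
  · refine ⟨by positivity, ?_⟩
    rw [Real.exp_le_one_iff]
    have : 0 ≤ l.toReal^2 := by positivity
    linarith

lemma Tk_meas : Measurable Tk :=
  Measurable.ite (measurableSet_singleton ⊤) (by fun_prop) (by fun_prop)

lemma Tk_inj : Function.Injective Tk := by
  intro a b hab
  unfold Tk at hab
  split_ifs at hab with ha hb hb
  · rw [ha, hb]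
  · exact absurd hab.symm (Real.exp_pos _).ne'
  · exact absurd hab (Real.exp_pos _).ne'
  · rw [Real.exp_eq_exp, neg_inj, sq_eq_sq₀ ENNReal.toReal_nonneg ENNReal.toReal_nonneg] at hab
    exact (ENNReal.toReal_eq_toReal_iff' ha hb).1 hab

noncomputable def Ti (l : ℝ≥0∞) : Icc (0:ℝ) 1 := ⟨Tk l, Tk_mem l⟩

lemma Ti_emb : MeasurableEmbedding Ti :=
  (Tk_meas.subtype_mk (h := Tk_mem)).measurableEmbedding
    fun _ _ h => Tk_inj (congrArg Subtype.val h)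

lemma ext_moments (P Q : Measure (Icc (0:ℝ) 1)) [IsProbabilityMeasure P] [IsProbabilityMeasure Q]
    (h : ∀ k : ℕ, ∫ x, (x : ℝ)^k ∂P = ∫ x, (x:ℝ)^k ∂Q) : P = Q := by
  have hc : ∀ (R : Measure (Icc (0:ℝ) 1)) [IsProbabilityMeasure R] (f : C(Icc (0:ℝ) 1, ℝ)),
      Integrable f R := fun R _ f => by
    exact (BoundedContinuousFunction.mkOfCompact f).integrable R
  have hi : ∀ (R : Measure (Icc (0:ℝ) 1)) [IsProbabilityMeasure R] (p : Polynomial ℝ),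
      Integrable (fun x : Icc (0:ℝ) 1 => p.eval (x:ℝ)) R :=
    fun R _ p => hc R (p.toContinuousMapOn _)
  have hp : ∀ p : Polynomial ℝ, ∫ x : Icc (0:ℝ) 1, p.eval (x:ℝ) ∂P = ∫ x : Icc (0:ℝ) 1, p.eval (x:ℝ) ∂Q := by
    intro p
    induction p using Polynomial.induction_on' with
    | add p q hp hq =>
      simp only [Polynomial.eval_add]
      rw [integral_add (hi P p) (hi P q),
        integral_add (hi Q p) (hi Q q), hp, hq]
    | monomial n a =>
      simp only [Polynomial.eval_monomial]
      rw [integral_const_mul, integral_const_mul, h]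
  refine ext_of_forall_integral_eq_of_IsFiniteMeasure fun f => ?_
  refine eq_of_forall_dist_le fun ε hε => ?_
  obtain ⟨p, hpε⟩ := exists_polynomial_near_continuousMap 0 1 f.toContinuousMap (ε/2) (by linarith)
  have key : ∀ (R : Measure (Icc (0:ℝ) 1)) [IsProbabilityMeasure R],
      abs ((∫ x, f x ∂ R) - (∫ x : Icc (0:ℝ) 1, p.eval (x:ℝ) ∂ R)) ≤ ε/2 := by
    intro R _
    rw [← integral_sub (f.integrable R) (hi R p)]
    have := norm_integral_le_of_norm_le_const (μ := R) (C := ε/2)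
      (f := fun x : Icc (0:ℝ) 1 => f x - p.eval (x:ℝ))
      (ae_of_all _ fun x => by
        have := ContinuousMap.norm_coe_le_norm (p.toContinuousMapOn (Icc (0:ℝ) 1) - f.toContinuousMap) x
        rw [norm_sub_rev]
        exact this.trans hpε.le)
    simpa using this
  have k1 := abs_le.1 (key P)
  have k2 := abs_le.1 (key Q)
  rw [hp] at k1
  rw [Real.dist_eq, abs_le]
  constructor <;> linarith [k1.1, k1.2, k2.1, k2.2]

/-- The map `ν ↦ F_ν` is injective on probability measures on `[0,∞]`. -/
theorem stmt4 (ν₁ ν₂ : Measure ℝ≥0∞)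
    (hν₁ : IsProbabilityMeasure ν₁) (hν₂ : IsProbabilityMeasure ν₂)
    (h : ∀ x y : ℝ, Fnu ν₁ x y = Fnu ν₂ x y) : ν₁ = ν₂ := by
  have hM : ∀ z, ∫ l, Mk z l ∂ν₁ = ∫ l, Mk z l ∂ν₂ := by
    intro z
    have := h 0 z
    rw [Fnu, Fnu, Real.exp_eq_exp, neg_inj] at this
    rw [int_Mk, int_Mk, this]
  have hT : ∀ ξ : ℝ, ∫ l, (if l = ⊤ then 0 else Real.exp (-(l.toReal^2 * (1/2 + 2*ξ^2)))) ∂ν₁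
      = ∫ l, (if l = ⊤ then 0 else Real.exp (-(l.toReal^2 * (1/2 + 2*ξ^2)))) ∂ν₂ := by
    intro ξ
    have hC : Cc ξ ≠ 0 := by
      rw [Cc]
      apply inv_ne_zero
      exact_mod_cast (by positivity : (1/4 + ξ^2 : ℝ) ≠ 0)
    have h1 := transform ξ ν₁
    simp_rw [hM] at h1
    rw [← transform ξ ν₂] at h1
    exact_mod_cast mul_left_cancel₀ hC h1
  apply Ti_emb.map_injective
  have := Measure.isProbabilityMeasure_map (μ := ν₁) Ti_emb.measurable.aemeasurable
  have := Measure.isProbabilityMeasure_map (μ := ν₂) Ti_emb.measurable.aemeasurable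
  apply ext_moments
  intro k
  rw [Ti_emb.integral_map, Ti_emb.integral_map]
  rcases Nat.eq_zero_or_pos k with rfl | hk
  · simp
  · have hk' : (1:ℝ) ≤ k := by exact_mod_cast hk
    have e : ∀ l, ((Ti l : ℝ))^k = if l = ⊤ then 0 else
        Real.exp (-(l.toReal^2 * (1/2 + 2*(Real.sqrt ((k - 1/2)/2))^2))) := by
      intro l
      simp only [Ti, Tk]
      split_ifs
      · simp [hk.ne']
      · rw [Real.sq_sqrt (by linarith), ← Real.exp_nat_mul]
        ring_nf
    simp_rw [e]
    exact hT _
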